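/- Let n ≥ 1, let A, B ∈ Matrix n n ℂ be positive semidefinite Hermitian matrices, let p ≥ 1 be a real number, and let τ ∈ [0,1]. Then (Tr(((1−τ)A + τB)^p))^{1/p} ≤ (1−τ) (Tr(A^p))^{1/p} + τ (Tr(B^p))^{1/p}. -/

import Mathlib

open scoped ComplexOrder

/-!
In an eigenbasis of `A + B` the eigenvalues of `A + B` are the sums of the diagonal entries of `A`
and `B`, so the scalar Minkowski inequality bounds its Schatten norm by the `ℓᵖ` norms of those two
diagonals. The diagonal of a Hermitian matrix in any orthonormal basis is the image of its
eigenvalues under a doubly stochastic matrix, so by Jensen's inequality its `ℓᵖ` norm is at most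
the Schatten norm.
-/

section

open Matrix Unitary

variable {ι κ 𝕜 : Type*} [Fintype ι] [DecidableEq ι] [RCLike 𝕜]

theorem re_mul_diagonal_mul_conjTranspose_apply_self (W : Matrix κ ι 𝕜) (d : ι → ℝ) (i : κ) :
    RCLike.re ((W * (diagonal (RCLike.ofReal ∘ d) : Matrix ι ι 𝕜) * Wᴴ) i i) =
      (W.map RCLike.normSq *ᵥ d) i := by
  rw [mul_apply, map_sum]
  refine Finset.sum_congr rfl fun j _ => ?_
  rw [mul_diagonal, conjTranspose_apply, mul_right_comm, RCLike.star_def, RCLike.mul_conj]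
  simp [RCLike.normSq_eq_def']

theorem map_normSq_mulVec_one {W : Matrix ι ι 𝕜} (hW : W ∈ unitaryGroup ι 𝕜) :
    W.map RCLike.normSq *ᵥ 1 = 1 := by
  ext i
  have hdiag : (diagonal (RCLike.ofReal ∘ (1 : ι → ℝ)) : Matrix ι ι 𝕜) = 1 := by
    simp [← diagonal_one, Function.comp_def]
  rw [← re_mul_diagonal_mul_conjTranspose_apply_self, hdiag, mul_one, ← star_eq_conjTranspose,
    mem_unitaryGroup_iff.mp hW, one_apply_eq, RCLike.one_re, Pi.one_apply]

theorem map_normSq_mem_doublyStochastic {W : Matrix ι ι 𝕜} (hW : W ∈ unitaryGroup ι 𝕜) :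
    W.map RCLike.normSq ∈ doublyStochastic ℝ ι := by
  have hstar : (star W).map RCLike.normSq = (W.map RCLike.normSq)ᵀ := by
    ext i j
    simp only [map_apply, star_apply, transpose_apply, RCLike.star_def, RCLike.normSq_conj]
  refine mem_doublyStochastic.mpr
    ⟨fun i j => RCLike.normSq_nonneg _, map_normSq_mulVec_one hW, ?_⟩
  rw [← mulVec_transpose, ← hstar]
  exact map_normSq_mulVec_one (star_mem hW)

theorem sum_map_mulVec_le_of_mem_doublyStochastic {P : Matrix ι ι ℝ}
    (hP : P ∈ doublyStochastic ℝ ι) {s : Set ℝ} {f : ℝ → ℝ} (hf : ConvexOn ℝ s f)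
    {x : ι → ℝ} (hx : ∀ j, x j ∈ s) :
    ∑ i, f ((P *ᵥ x) i) ≤ ∑ j, f (x j) :=
  calc ∑ i, f ((P *ᵥ x) i)
      ≤ ∑ i, ∑ j, P i j * f (x j) := Finset.sum_le_sum fun i _ =>
        hf.map_sum_le (fun _ _ => nonneg_of_mem_doublyStochastic hP)
          (sum_row_of_mem_doublyStochastic hP i) fun j _ => hx j
    _ = ∑ j, f (x j) := by
        rw [Finset.sum_comm]
        simp only [← Finset.sum_mul, sum_col_of_mem_doublyStochastic hP, one_mul]

theorem convexOn_norm_rpow {E : Type*} [SeminormedAddCommGroup E] [NormedSpace ℝ E] {s : Set E}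
    (hs : Convex ℝ s) {p : ℝ} (hp : 1 ≤ p) : ConvexOn ℝ s fun x => ‖x‖ ^ p := by
  refine ⟨hs, fun x hx y hy a b ha hb hab => ?_⟩
  calc ‖a • x + b • y‖ ^ p
      ≤ (a • ‖x‖ + b • ‖y‖) ^ p := by
        gcongr
        exact (convexOn_norm hs).2 hx hy ha hb hab
    _ ≤ a • ‖x‖ ^ p + b • ‖y‖ ^ p :=
        (convexOn_rpow hp).2 (norm_nonneg x) (norm_nonneg y) ha hb hab

variable {A B : Matrix ι ι 𝕜}

theorem re_trace_cfc_eq_sum_eigenvalues (hA : A.IsHermitian) (f : ℝ → ℝ) :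
    RCLike.re (cfc f A).trace = ∑ i, f (hA.eigenvalues i) := by
  rw [hA.cfc_eq, IsHermitian.cfc, conjStarAlgAut_apply, trace_mul_comm, ← mul_assoc,
    coe_star_mul_self, one_mul, trace_diagonal, map_sum]
  simp only [Function.comp_apply, RCLike.ofReal_re]

theorem re_conjStarAlgAut_apply_self_eq_mulVec_eigenvalues (hA : A.IsHermitian)
    (U : unitaryGroup ι 𝕜) (i : ι) :
    RCLike.re (conjStarAlgAut 𝕜 _ U A i i) =
      ((U * hA.eigenvectorUnitary : Matrix ι ι 𝕜).map RCLike.normSq *ᵥ hA.eigenvalues) i := by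
  conv_lhs => rw [hA.spectral_theorem]
  rw [← re_mul_diagonal_mul_conjTranspose_apply_self, conjStarAlgAut_apply, conjStarAlgAut_apply,
    ← star_eq_conjTranspose, star_mul, mul_assoc _ _ (_ * _)]
  simp only [mul_assoc]

/-- **Peierls' inequality**. -/
theorem sum_map_re_conjStarAlgAut_apply_self_le_re_trace_cfc (hA : A.IsHermitian)
    (U : unitaryGroup ι 𝕜) {s : Set ℝ} (hs : spectrum ℝ A ⊆ s) {f : ℝ → ℝ}
    (hf : ConvexOn ℝ s f) :
    ∑ i, f (RCLike.re (conjStarAlgAut 𝕜 _ U A i i)) ≤ RCLike.re (cfc f A).trace := by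
  simp only [re_conjStarAlgAut_apply_self_eq_mulVec_eigenvalues hA,
    re_trace_cfc_eq_sum_eigenvalues hA]
  exact sum_map_mulVec_le_of_mem_doublyStochastic
    (map_normSq_mem_doublyStochastic (mul_mem U.2 hA.eigenvectorUnitary.2)) hf
    fun j => hs (hA.eigenvalues_mem_spectrum_real j)

/-- The Schatten `p`-norm `(Tr |A|ᵖ)^(1/p)` of a Hermitian matrix `A`, with `|A|ᵖ` given by the
functional calculus over `ℝ`. For `A` not Hermitian that calculus returns `0`, so this is not the
usual norm, which is built from singular values. -/
noncomputable def schattenNorm (p : ℝ) (A : Matrix ι ι 𝕜) : ℝ :=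
  RCLike.re (cfc (fun x : ℝ => |x| ^ p) A).trace ^ (1 / p)

theorem schattenNorm_eq_sum_eigenvalues (hA : A.IsHermitian) (p : ℝ) :
    schattenNorm p A = (∑ i, |hA.eigenvalues i| ^ p) ^ (1 / p) := by
  rw [schattenNorm, re_trace_cfc_eq_sum_eigenvalues hA]

theorem schattenNorm_of_posSemidef (hA : A.PosSemidef) (p : ℝ) :
    schattenNorm p A = RCLike.re (hA.1.cfc fun x => x ^ p).trace ^ (1 / p) := by
  rw [schattenNorm_eq_sum_eigenvalues hA.1, ← hA.1.cfc_eq, re_trace_cfc_eq_sum_eigenvalues hA.1]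
  simp only [abs_of_nonneg (hA.eigenvalues_nonneg _)]

theorem schattenNorm_smul {p : ℝ} (hp : 0 < p) (a : ℝ) (hA : A.IsHermitian) :
    schattenNorm p (a • A) = |a| * schattenNorm p A := by
  have hcont : Continuous fun x : ℝ => |x| ^ p :=
    continuous_abs.rpow_const fun _ => Or.inr hp.le
  have hcfc : cfc (fun x : ℝ => |x| ^ p) (a • A) =
      |a| ^ p • cfc (fun x : ℝ => |x| ^ p) A := by
    rw [← cfc_comp_smul a _ A hcont.continuousOn hA.isSelfAdjoint,
      ← cfc_smul _ _ A hcont.continuousOn]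
    simp only [smul_eq_mul, abs_mul, Real.mul_rpow (abs_nonneg _) (abs_nonneg _)]
  have htrace : 0 ≤ RCLike.re (cfc (fun x : ℝ => |x| ^ p) A).trace := by
    rw [re_trace_cfc_eq_sum_eigenvalues hA]
    positivity
  rw [schattenNorm, hcfc, trace_smul, RCLike.smul_re, Real.mul_rpow (by positivity) htrace,
    one_div, Real.rpow_rpow_inv (abs_nonneg a) hp.ne', schattenNorm, one_div]

theorem sum_abs_re_conjStarAlgAut_apply_self_rpow_le_schattenNorm {p : ℝ} (hp : 1 ≤ p)
    (hA : A.IsHermitian) (U : unitaryGroup ι 𝕜) :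
    (∑ i, |RCLike.re (conjStarAlgAut 𝕜 _ U A i i)| ^ p) ^ (1 / p) ≤ schattenNorm p A := by
  refine Real.rpow_le_rpow (by positivity) ?_ (by positivity)
  exact sum_map_re_conjStarAlgAut_apply_self_le_re_trace_cfc hA U (Set.subset_univ _)
    (convexOn_norm_rpow convex_univ hp)

theorem schattenNorm_add_le {p : ℝ} (hp : 1 ≤ p) (hA : A.IsHermitian) (hB : B.IsHermitian) :
    schattenNorm p (A + B) ≤ schattenNorm p A + schattenNorm p B := by
  have hAB := hA.add hB
  let U := star hAB.eigenvectorUnitary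
  let diagRe (M : Matrix ι ι 𝕜) (i : ι) : ℝ := RCLike.re (conjStarAlgAut 𝕜 _ U M i i)
  have eigenvalues_eq (i : ι) : hAB.eigenvalues i = diagRe A i + diagRe B i := by
    rw [← map_add, ← Matrix.add_apply, ← map_add, hAB.conjStarAlgAut_star_eigenvectorUnitary,
      diagonal_apply_eq, Function.comp_apply, RCLike.ofReal_re]
  calc schattenNorm p (A + B)
      = (∑ i, |diagRe A i + diagRe B i| ^ p) ^ (1 / p) := by
        simp only [schattenNorm_eq_sum_eigenvalues hAB, eigenvalues_eq]
    _ ≤ (∑ i, |diagRe A i| ^ p) ^ (1 / p) + (∑ i, |diagRe B i| ^ p) ^ (1 / p) :=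
        Real.Lp_add_le _ _ _ hp
    _ ≤ schattenNorm p A + schattenNorm p B :=
        add_le_add (sum_abs_re_conjStarAlgAut_apply_self_rpow_le_schattenNorm hp hA U)
          (sum_abs_re_conjStarAlgAut_apply_self_rpow_le_schattenNorm hp hB U)

theorem trace_power_convexity_general {p : ℝ} (hp : 1 ≤ p) (hA : A.IsHermitian)
    (hB : B.IsHermitian) (a b : ℝ) :
    schattenNorm p (a • A + b • B) ≤ |a| * schattenNorm p A + |b| * schattenNorm p B := by
  have hp0 : 0 < p := zero_lt_one.trans_le hp
  rw [← schattenNorm_smul hp0 a hA, ← schattenNorm_smul hp0 b hB]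
  exact schattenNorm_add_le hp (hA.smul (.all a)) (hB.smul (.all b))

end

/-- Minkowski-type inequality for Schatten `p`-traces of positive semidefinite matrices:
for `p ≥ 1`, `τ ∈ [0,1]`,
`(Tr(((1−τ)A + τB)^p))^{1/p} ≤ (1−τ)(Tr A^p)^{1/p} + τ (Tr B^p)^{1/p}`,
where `M^p` denotes the functional calculus applied with `fun x => x ^ p` (real power). -/
theorem trace_power_convexity
    (n : ℕ) (hn : 1 ≤ n)
    (A B : Matrix (Fin n) (Fin n) ℂ)
    (hA : A.PosSemidef) (hB : B.PosSemidef)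
    (p : ℝ) (hp : 1 ≤ p)
    (τ : ℝ) (hτ : τ ∈ Set.Icc (0 : ℝ) 1)
    (hC : ((1 - τ) • A + τ • B).PosSemidef) :
    ((hC.1.cfc fun x => x ^ p).trace).re ^ (1 / p)
      ≤ (1 - τ) * ((hA.1.cfc fun x => x ^ p).trace).re ^ (1 / p)
        + τ * ((hB.1.cfc fun x => x ^ p).trace).re ^ (1 / p) := by
  simpa [schattenNorm_of_posSemidef, abs_of_nonneg hτ.1, abs_of_nonneg (sub_nonneg.2 hτ.2), hA, hB,
    hC] using trace_power_convexity_general hp hA.1 hB.1 (1 - τ) τ
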